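/- With G_n and LD_n as above, let pa(G) denote the number of path components of G and cyc_i(G) the number of cycle components lying in layer V_i. Then Σ_{G ∈ LD_n} x^{pa(G)} Π_{i=1}^r (α_i+1)^{cyc_i(G)} = ℒ_n^{(α)}(x), where ℒ_n^{(α)}(x) := (-1)^{|n|} L_n^{(α)}(-x) = Σ_{k_1,...,k_r} (Π_i C(n_i,k_i)(α_i+1+k_1+···+k_i)^{rising(n_i-k_i)}) x^{|k|}. -/

import Mathlib

namespace LD

variable {V : Type*} [Fintype V] [DecidableEq V]

/-- A Laguerre digraph: each vertex has out-degree ≤ 1 and in-degree ≤ 1. -/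
def IsLaguerre (E : Finset (V × V)) : Prop :=
  (∀ a b c : V, (a, b) ∈ E → (a, c) ∈ E → b = c) ∧
  (∀ a b c : V, (a, c) ∈ E → (b, c) ∈ E → a = b)

instance : DecidablePred (IsLaguerre (V := V)) := fun _ => by
  unfold IsLaguerre; infer_instance

/-- The underlying (symmetrized) adjacency relation of an edge set. -/
def Adj (E : Finset (V × V)) (a b : V) : Prop := (a, b) ∈ E ∨ (b, a) ∈ E

/-- The weakly connected component of a vertex `v`. -/
def Component (E : Finset (V × V)) (v : V) : Set V :=
  {w | Relation.ReflTransGen (Adj E) v w}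

/-- `S` is the vertex set of a directed cycle of the Laguerre digraph `E`:
it is nonempty, every vertex of `S` has a successor in `S`, and it is minimal
with these properties. -/
def IsCycleSet (E : Finset (V × V)) (S : Set V) : Prop :=
  S.Nonempty ∧ (∀ v ∈ S, ∃ w ∈ S, (v, w) ∈ E) ∧
  ∀ T ⊆ S, T.Nonempty → (∀ v ∈ T, ∃ w ∈ T, (v, w) ∈ E) → T = S

/-- The number of cycle components. -/
noncomputable def cyc (E : Finset (V × V)) : ℕ :=
  Set.ncard {S : Set V | IsCycleSet E S}

/-- The number of path components: weakly connected components containing a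
vertex with no outgoing edge. -/
noncomputable def pa (E : Finset (V × V)) : ℕ :=
  Set.ncard {C : Set V | (∃ v, C = Component E v) ∧ ∃ v ∈ C, ∀ w, (v, w) ∉ E}

end LD



namespace LD

section Structure

variable {V : Type*} {E : Finset (V × V)}

/-- `b` can be reached from `a` along directed edges of `E`. -/
def Reach (E : Finset (V × V)) (a b : V) : Prop :=
  Relation.ReflTransGen (fun v w => (v, w) ∈ E) a b

/-- `u` has no outgoing edge. -/
def IsSink (E : Finset (V × V)) (u : V) : Prop := ∀ w, (u, w) ∉ E

/-- `a` has no incoming edge. -/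
def IsSource (E : Finset (V × V)) (a : V) : Prop := ∀ w, (w, a) ∉ E

theorem IsSink.eq_of_reach {u v : V} (hu : IsSink E u) (h : Reach E u v) : v = u := by
  rcases Relation.ReflTransGen.cases_head h with h | ⟨c, hc, _⟩
  · exact h.symm
  · exact absurd hc (hu c)

theorem IsLaguerre.reach_sink [Fintype V] [DecidableEq V] (hE : IsLaguerre E) {a u v : V}
    (hu : IsSink E u) (hau : Reach E a u) (hav : Reach E a v) : Reach E v u := by
  rcases Relation.ReflTransGen.total_of_right_unique (fun x y z h h' => hE.1 x y z h h') hau hav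
    with h | h
  · rw [hu.eq_of_reach h]; exact Relation.ReflTransGen.refl
  · exact h

theorem IsLaguerre.exists_pred_of_closed [Fintype V] [DecidableEq V] (hE : IsLaguerre E)
    {S : Set V} (hS : ∀ v ∈ S, ∃ w ∈ S, (v, w) ∈ E) {v : V} (hv : v ∈ S) :
    ∃ w ∈ S, (w, v) ∈ E := by
  choose f hfS hfE using hS
  have hinj : Function.Injective (fun s : S => (⟨f s s.2, hfS s s.2⟩ : S)) := by
    intro s t hst
    have h : f s s.2 = f t t.2 := congrArg Subtype.val hst
    exact Subtype.ext (hE.2 _ _ _ (hfE s s.2) (h ▸ hfE t t.2))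
  obtain ⟨w, hw⟩ := (Finite.injective_iff_surjective.mp hinj) ⟨v, hv⟩
  have h : f w w.2 = v := congrArg Subtype.val hw
  exact ⟨w, w.2, h ▸ hfE w w.2⟩

theorem IsLaguerre.exists_sink_reach [Fintype V] [DecidableEq V] (hE : IsLaguerre E) {a : V}
    (ha : IsSource E a) : ∃ u, IsSink E u ∧ Reach E a u := by
  by_contra! h
  have hS : ∀ v ∈ {v | Reach E a v}, ∃ w ∈ {v | Reach E a v}, (v, w) ∈ E := by
    intro v hv
    have hns : ¬ IsSink E v := fun hs => h v hs hv
    simp only [IsSink, not_forall, not_not] at hns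
    obtain ⟨w, hw⟩ := hns
    exact ⟨w, Relation.ReflTransGen.tail hv hw, hw⟩
  obtain ⟨w, -, hw⟩ := hE.exists_pred_of_closed hS
    (show a ∈ {v | Reach E a v} from Relation.ReflTransGen.refl)
  exact ha w hw

theorem IsLaguerre.sink_unique [Fintype V] [DecidableEq V] (hE : IsLaguerre E) {a u v : V}
    (hu : IsSink E u) (hv : IsSink E v) (hau : Reach E a u) (hav : Reach E a v) : u = v :=
  hv.eq_of_reach (hE.reach_sink hu hau hav)

theorem IsLaguerre.insert_edge [Fintype V] [DecidableEq V] (hE : IsLaguerre E) {u a : V}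
    (hu : IsSink E u) (ha : IsSource E a) : IsLaguerre (insert (u, a) E) := by
  obtain ⟨h1, h2⟩ := hE
  constructor
  · intro x y z hy hz
    simp only [Finset.mem_insert, Prod.mk.injEq] at hy hz
    rcases hy with ⟨rfl, rfl⟩ | hy <;> rcases hz with ⟨h, rfl⟩ | hz
    · rfl
    · exact absurd hz (hu _)
    · exact absurd (h ▸ hy) (hu _)
    · exact h1 _ _ _ hy hz
  · intro x y z hx hy
    simp only [Finset.mem_insert, Prod.mk.injEq] at hx hy
    rcases hx with ⟨rfl, rfl⟩ | hx <;> rcases hy with ⟨rfl, h⟩ | hy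
    · rfl
    · exact absurd hy (ha _)
    · exact absurd (h ▸ hx) (ha _)
    · exact h2 _ _ _ hx hy

theorem IsLaguerre.mono [Fintype V] [DecidableEq V] {E' : Finset (V × V)} (hE : IsLaguerre E)
    (h : E' ⊆ E) : IsLaguerre E' :=
  ⟨fun a b c hb hc => hE.1 a b c (h hb) (h hc), fun a b c ha hb => hE.2 a b c (h ha) (h hb)⟩

/-- Inserting an edge starting outside `S` does not change whether `S` is a cycle. -/
theorem isCycleSet_insert_of_notMem [DecidableEq V] {u a : V} {S : Set V} (hu : u ∉ S) :
    IsCycleSet (insert (u, a) E) S ↔ IsCycleSet E S := by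
  have key : ∀ T ⊆ S, (∀ v ∈ T, ∃ w ∈ T, (v, w) ∈ insert (u, a) E) ↔
      ∀ v ∈ T, ∃ w ∈ T, (v, w) ∈ E := by
    intro T hT
    refine forall₂_congr fun v hv => exists_congr fun w => and_congr_right fun _ => ?_
    have : v ≠ u := fun h => hu (h ▸ hT hv)
    simp [this]
  unfold IsCycleSet
  rw [key S subset_rfl]
  refine and_congr_right fun _ => and_congr_right fun _ => ?_
  refine forall₂_congr fun T hT => ?_
  rw [key T hT]

theorem not_isCycleSet_of_isSink {u : V} {S : Set V} (hu : IsSink E u) (h : u ∈ S) :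
    ¬ IsCycleSet E S := fun hS => by
  obtain ⟨w, -, hw⟩ := hS.2.1 u h
  exact hu w hw

theorem IsCycleSet.eq_reach [Fintype V] [DecidableEq V] (hE : IsLaguerre E) {S : Set V}
    (hS : IsCycleSet E S) {a : V} (ha : a ∈ S) : {v | Reach E a v} = S := by
  have hsub : {v | Reach E a v} ⊆ S := by
    intro v hv
    induction hv with
    | refl => exact ha
    | tail _ h ih =>
      obtain ⟨w, hw, hvw⟩ := hS.2.1 _ ih
      rwa [hE.1 _ _ _ h hvw]
  refine hS.2.2 _ hsub ⟨a, Relation.ReflTransGen.refl⟩ fun v hv => ?_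
  obtain ⟨w, -, hvw⟩ := hS.2.1 v (hsub hv)
  exact ⟨w, Relation.ReflTransGen.tail hv hvw, hvw⟩

theorem Reach.of_insert [DecidableEq V] {u a v : V} (h : Reach (insert (u, a) E) a v) :
    Reach E a v ∨ Reach E a u := by
  induction h with
  | refl => exact Or.inl Relation.ReflTransGen.refl
  | tail _ h ih =>
    rcases ih with ih | ih
    · rcases Finset.mem_insert.mp h with h | h
      · obtain ⟨rfl, rfl⟩ := Prod.mk.inj h
        exact Or.inr ih
      · exact Or.inl (Relation.ReflTransGen.tail ih h)
    · exact Or.inr ih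

/-- A cycle through a newly inserted edge `u → a` arises only by closing the path from `a`
to `u`. -/
theorem IsCycleSet.eq_of_mem_insert [Fintype V] [DecidableEq V] (hE : IsLaguerre E) {u a : V}
    (hu : IsSink E u) (ha : IsSource E a) {S : Set V}
    (hS : IsCycleSet (insert (u, a) E) S) (huS : u ∈ S) :
    Reach E a u ∧ S = {v | Reach (insert (u, a) E) a v} := by
  obtain ⟨w, hw, huw⟩ := hS.2.1 u huS
  have hwa : w = a := by
    rcases Finset.mem_insert.mp huw with h | h
    · exact (Prod.mk.inj h).2
    · exact absurd h (hu w)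
  subst hwa
  have h := hS.eq_reach (hE.insert_edge hu ha) hw
  refine ⟨?_, h.symm⟩
  have hu' : Reach (insert (u, w) E) w u := by rw [← h] at huS; exact huS
  exact hu'.of_insert.elim id id

theorem Reach.insert [DecidableEq V] {a b : V} (e : V × V) (h : Reach E a b) :
    Reach (insert e E) a b :=
  Relation.ReflTransGen.mono (fun _ _ h => Finset.mem_insert_of_mem h) _ _ h

/-- Closing the path from `a` to `u` creates a cycle. -/
theorem isCycleSet_insert_of_reach [Fintype V] [DecidableEq V] (hE : IsLaguerre E) {u a : V}
    (hu : IsSink E u) (ha : IsSource E a) (h : Reach E a u) :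
    IsCycleSet (insert (u, a) E) {v | Reach E a v} := by
  have hE' := hE.insert_edge hu ha
  refine ⟨⟨a, Relation.ReflTransGen.refl⟩, fun v hv => ?_, fun T hTS hT hcl => ?_⟩
  · by_cases hvs : IsSink E v
    · rw [← hE.sink_unique hu hvs h hv]
      exact ⟨a, Relation.ReflTransGen.refl, Finset.mem_insert_self _ _⟩
    · simp only [IsSink, not_forall, not_not] at hvs
      obtain ⟨w, hw⟩ := hvs
      exact ⟨w, Relation.ReflTransGen.tail hv hw, Finset.mem_insert_of_mem hw⟩
  · have hclosed : ∀ v ∈ T, ∀ w, Reach (insert (u, a) E) v w → w ∈ T := by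
      intro v hv w hvw
      induction hvw with
      | refl => exact hv
      | tail _ h ih =>
        obtain ⟨w, hw, hvw⟩ := hcl _ ih
        rwa [hE'.1 _ _ _ h hvw]
    obtain ⟨t, ht⟩ := hT
    have huT : u ∈ T := hclosed t ht u ((hE.reach_sink hu h (hTS ht)).insert _)
    have haT : a ∈ T := hclosed u huT a
      (Relation.ReflTransGen.single (Finset.mem_insert_self _ _))
    exact hTS.antisymm fun v hv => hclosed a haT v (Reach.insert _ hv)

theorem reach_of_component [Fintype V] [DecidableEq V] (hE : IsLaguerre E) {v w : V}
    (hv : IsSink E v) (h : w ∈ Component E v) : Reach E w v := by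
  induction h with
  | refl => exact Relation.ReflTransGen.refl
  | tail _ h ih =>
    rcases h with h | h
    · rcases Relation.ReflTransGen.cases_head ih with h' | ⟨c, hc, hcv⟩
      · exact absurd (h' ▸ h) (hv _)
      · rwa [hE.1 _ _ _ h hc]
    · exact Relation.ReflTransGen.head h ih

theorem component_eq_of_mem {v w : V} (h : w ∈ Component E v) :
    Component E v = Component E w := by
  have hsymm : Std.Symm (Adj E) := ⟨fun _ _ h => h.symm⟩
  have hsymm' : ∀ x y, Relation.ReflTransGen (Adj E) x y → Relation.ReflTransGen (Adj E) y x :=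
    fun x y h => Relation.ReflTransGen.stdSymm.symm x y h
  ext z
  exact ⟨fun hz => (hsymm' _ _ h).trans hz, fun hz => Relation.ReflTransGen.trans h hz⟩

theorem pa_eq_ncard_sinks [Fintype V] [DecidableEq V] (hE : IsLaguerre E) :
    pa E = Set.ncard {v | IsSink E v} := by
  have himg : {C : Set V | (∃ v, C = Component E v) ∧ ∃ v ∈ C, ∀ w, (v, w) ∉ E} =
      Component E '' {v | IsSink E v} := by
    ext C
    constructor
    · rintro ⟨⟨v, rfl⟩, w, hw, hs⟩
      exact ⟨w, hs, (component_eq_of_mem hw).symm⟩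
    · rintro ⟨v, hv, rfl⟩
      exact ⟨⟨v, rfl⟩, v, Relation.ReflTransGen.refl, hv⟩
  rw [pa, himg, Set.InjOn.ncard_image]
  intro v hv w hw hvw
  have : w ∈ Component E v := by rw [hvw]; exact Relation.ReflTransGen.refl
  exact IsSink.eq_of_reach hw (reach_of_component hE hv this)

theorem IsLaguerre.card_image_snd [Fintype V] [DecidableEq V] (hE : IsLaguerre E) :
    (E.image Prod.snd).card = E.card := by
  refine Finset.card_image_of_injOn ?_
  rintro ⟨a, b⟩ h ⟨c, d⟩ h' (rfl : b = d)
  rw [hE.2 _ _ _ h h']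

theorem IsLaguerre.card_image_fst [Fintype V] [DecidableEq V] (hE : IsLaguerre E) :
    (E.image Prod.fst).card = E.card := by
  refine Finset.card_image_of_injOn ?_
  rintro ⟨a, b⟩ h ⟨c, d⟩ h' (rfl : a = c)
  rw [hE.1 _ _ _ h h']

theorem isSink_iff_notMem_image [DecidableEq V] {u : V} :
    IsSink E u ↔ u ∉ E.image Prod.fst := by
  simp [IsSink]

theorem isSource_iff_notMem_image [DecidableEq V] {u : V} :
    IsSource E u ↔ u ∉ E.image Prod.snd := by
  simp [IsSource]

theorem pa_eq_card_compl_image_snd [Fintype V] [DecidableEq V] (hE : IsLaguerre E) :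
    pa E = (E.image Prod.snd)ᶜ.card := by
  have : {v | IsSink E v} = ((E.image Prod.fst)ᶜ : Finset V) := by
    ext v
    simp [isSink_iff_notMem_image]
  rw [pa_eq_ncard_sinks hE, this, Set.ncard_coe_finset, Finset.card_compl, Finset.card_compl,
    hE.card_image_fst, hE.card_image_snd]

end Structure

section Weight

variable {V : Type*} [Fintype V] [DecidableEq V] {ι : Type*} [LinearOrder ι]
  {E : Finset (V × V)} {ℓ : V → ι}

/-- The cycles of `E` lying in layer `i`. -/
def layerCycles (ℓ : V → ι) (E : Finset (V × V)) (i : ι) : Set (Set V) :=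
  {S | IsCycleSet E S ∧ ∀ v ∈ S, ℓ v = i}

/-- The Laguerre digraphs that respect the layers and in which exactly the vertices of `T` have an
incoming edge. -/
def layered (ℓ : V → ι) (T : Finset V) : Finset (Finset (V × V)) :=
  Finset.univ.filter fun E =>
    IsLaguerre E ∧ (∀ e ∈ E, ℓ e.1 ≤ ℓ e.2) ∧ E.image Prod.snd = T

theorem mem_layered {T : Finset V} : E ∈ layered ℓ T ↔
    IsLaguerre E ∧ (∀ e ∈ E, ℓ e.1 ≤ ℓ e.2) ∧ E.image Prod.snd = T := by
  simp [layered]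

theorem layer_le_of_reach {V ι : Type*} [LinearOrder ι] {E : Finset (V × V)} {ℓ : V → ι}
    (hℓ : ∀ e ∈ E, ℓ e.1 ≤ ℓ e.2) {v w : V} (h : Reach E v w) :
    ℓ v ≤ ℓ w := by
  induction h with
  | refl => exact le_rfl
  | tail _ h ih => exact ih.trans (hℓ _ h)

theorem layer_eq_of_reach {T : Finset V} (hE : E ∈ layered ℓ T) {a v : V}
    (hT : ∀ t ∈ T, ℓ t ≤ ℓ a) (h : Reach E a v) : ℓ v = ℓ a := by
  obtain ⟨-, hℓ, hT'⟩ := mem_layered.mp hE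
  refine le_antisymm ?_ (layer_le_of_reach hℓ h)
  rcases Relation.ReflTransGen.cases_tail h with rfl | ⟨c, -, hc⟩
  · exact le_rfl
  · exact hT _ (hT' ▸ Finset.mem_image_of_mem Prod.snd hc)

theorem layerCycles_insert_of_not_reach {ι : Type*} {ℓ : V → ι} (hE : IsLaguerre E) {u a : V} (hu : IsSink E u)
    (ha : IsSource E a) (h : ¬ Reach E a u) (i : ι) :
    layerCycles ℓ (insert (u, a) E) i = layerCycles ℓ E i := by
  ext S
  refine and_congr_left fun _ => ?_
  by_cases huS : u ∈ S
  · exact iff_of_false (fun hS => h (hS.eq_of_mem_insert hE hu ha huS).1)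
      (not_isCycleSet_of_isSink hu huS)
  · exact isCycleSet_insert_of_notMem huS

theorem layerCycles_insert_of_reach {T : Finset V} (hE : E ∈ layered ℓ T) {u a : V}
    (hT : ∀ t ∈ T, ℓ t ≤ ℓ a) (hu : IsSink E u) (ha : IsSource E a) (h : Reach E a u) (i : ι) :
    layerCycles ℓ (insert (u, a) E) i =
      if i = ℓ a then insert {v | Reach E a v} (layerCycles ℓ E i) else layerCycles ℓ E i := by
  have hL := (mem_layered.mp hE).1
  have hnew := isCycleSet_insert_of_reach hL hu ha h
  have hcyc : ∀ S : Set V, IsCycleSet (insert (u, a) E) S ↔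
      S = {v | Reach E a v} ∨ IsCycleSet E S := by
    intro S
    by_cases huS : u ∈ S
    · rw [or_iff_left (not_isCycleSet_of_isSink hu huS)]
      constructor
      · intro hS
        rw [(hS.eq_of_mem_insert hL hu ha huS).2, (hnew.eq_of_mem_insert hL hu ha h).2]
      · rintro rfl
        exact hnew
    · rw [isCycleSet_insert_of_notMem huS, or_iff_right]
      rintro rfl
      exact huS h
  have hlayer : (∀ v ∈ {v | Reach E a v}, ℓ v = i) ↔ i = ℓ a :=
    ⟨fun H => (H a Relation.ReflTransGen.refl).symm,
      fun H v hv => H ▸ layer_eq_of_reach hE hT hv⟩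
  ext S
  simp only [layerCycles, Set.mem_ofPred_eq, hcyc]
  split_ifs with hi
  · simp only [Set.mem_insert_iff, Set.mem_ofPred_eq, or_and_right]
    refine or_congr_left (and_iff_left_of_imp ?_)
    rintro rfl
    exact hlayer.mpr hi
  · simp only [Set.mem_ofPred_eq, or_and_right]
    refine or_iff_right ?_
    rintro ⟨rfl, H⟩
    exact hi (hlayer.mp H)

/-- The weight of the cycles of `E`. -/
noncomputable def cycleWeight {V ι : Type*} [Fintype ι] (ℓ : V → ι) (β : ι → ℝ) (E : Finset (V × V)) : ℝ :=
  ∏ i, (β i + 1) ^ (layerCycles ℓ E i).ncard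

open Classical in
theorem cycleWeight_insert [Fintype ι] (β : ι → ℝ) {T : Finset V} (hE : E ∈ layered ℓ T)
    {u a : V} (hT : ∀ t ∈ T, ℓ t ≤ ℓ a) (hu : IsSink E u) (ha : IsSource E a) :
    cycleWeight ℓ β (insert (u, a) E) =
      cycleWeight ℓ β E * (1 + if Reach E a u then β (ℓ a) else 0) := by
  split_ifs with h
  · have hnot : ∀ i, {v | Reach E a v} ∉ layerCycles ℓ E i := fun i hi =>
      not_isCycleSet_of_isSink hu h hi.1
    have hterm : ∀ i, (β i + 1) ^ (layerCycles ℓ (insert (u, a) E) i).ncard =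
        (β i + 1) ^ (layerCycles ℓ E i).ncard * if i = ℓ a then β (ℓ a) + 1 else 1 := by
      intro i
      rw [layerCycles_insert_of_reach hE hT hu ha h]
      split_ifs with hi
      · rw [Set.ncard_insert_of_notMem (hnot i), pow_succ, hi]
      · rw [mul_one]
    rw [cycleWeight, Finset.prod_congr rfl fun i _ => hterm i, Finset.prod_mul_distrib,
      Finset.prod_ite_eq' Finset.univ, if_pos (Finset.mem_univ _), cycleWeight, add_comm 1]
  · simp only [cycleWeight,
      layerCycles_insert_of_not_reach (mem_layered.mp hE).1 hu ha h, add_zero, mul_one]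

open Classical in
/-- The vertices from which a new edge into `a` may start. -/
noncomputable def available (ℓ : V → ι) (E : Finset (V × V)) (a : V) : Finset V :=
  Finset.univ.filter fun u => ℓ u ≤ ℓ a ∧ IsSink E u

theorem mem_available {V : Type*} [Fintype V] {E : Finset (V × V)} {ℓ : V → ι} {a u : V} :
    u ∈ available ℓ E a ↔ ℓ u ≤ ℓ a ∧ IsSink E u := by
  simp [available]

theorem card_available_add {T : Finset V} (hE : E ∈ layered ℓ T) {a : V}
    (hT : ∀ t ∈ T, ℓ t ≤ ℓ a) :
    (available ℓ E a).card + T.card = (Finset.univ.filter fun u => ℓ u ≤ ℓ a).card := by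
  obtain ⟨hL, hℓ, hT'⟩ := mem_layered.mp hE
  rw [← hT', hL.card_image_snd, ← hL.card_image_fst, ← Finset.card_union_of_disjoint]
  · congr 1
    ext u
    simp only [mem_available, isSink_iff_notMem_image, Finset.mem_union, Finset.mem_filter,
      Finset.mem_univ, true_and]
    refine ⟨?_, fun h => ?_⟩
    · rintro (h | h)
      · exact h.1
      · obtain ⟨e, he, rfl⟩ := Finset.mem_image.mp h
        exact (hℓ e he).trans (hT _ (hT' ▸ Finset.mem_image_of_mem _ he))
    · by_cases hu : u ∈ E.image Prod.fst
      · exact Or.inr hu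
      · exact Or.inl ⟨h, hu⟩
  · rw [Finset.disjoint_left]
    intro u hu
    exact isSink_iff_notMem_image.mp (mem_available.mp hu).2

theorem sum_cycleWeight_insert [Fintype ι] (β : ι → ℝ) {T : Finset V} (hE : E ∈ layered ℓ T)
    {a : V} (haT : a ∉ T) (hT : ∀ t ∈ T, ℓ t ≤ ℓ a) :
    ∑ u ∈ available ℓ E a, cycleWeight ℓ β (insert (u, a) E) =
      cycleWeight ℓ β E *
        (β (ℓ a) + (Finset.univ.filter fun u => ℓ u ≤ ℓ a).card - T.card) := by
  classical
  obtain ⟨hL, hℓ, hT'⟩ := mem_layered.mp hE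
  have ha : IsSource E a := isSource_iff_notMem_image.mpr (hT' ▸ haT)
  obtain ⟨e, hes, her⟩ := hL.exists_sink_reach ha
  have hmem : e ∈ available ℓ E a :=
    mem_available.mpr ⟨(layer_eq_of_reach hE hT her).le, hes⟩
  have hterm : ∀ u ∈ available ℓ E a, cycleWeight ℓ β (insert (u, a) E) =
      cycleWeight ℓ β E * (1 + if u = e then β (ℓ a) else 0) := by
    intro u hu
    have hus : IsSink E u := (mem_available.mp hu).2
    rw [cycleWeight_insert β hE hT hus ha]
    have hiff : Reach E a u ↔ u = e :=
      ⟨fun h => hL.sink_unique hus hes h her, fun h => h ▸ her⟩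
    simp only [hiff]
  rw [Finset.sum_congr rfl hterm, ← Finset.mul_sum, Finset.sum_add_distrib,
    Finset.sum_ite_eq', if_pos hmem, ← card_available_add hE hT]
  simp only [Finset.sum_const, nsmul_eq_mul, mul_one]
  push_cast
  ring

theorem sum_layered_insert (f : Finset (V × V) → ℝ) {T : Finset V} {a : V} (haT : a ∉ T) :
    ∑ E ∈ layered ℓ (insert a T), f E =
      ∑ E ∈ layered ℓ T, ∑ u ∈ available ℓ E a, f (insert (u, a) E) := by
  rw [Finset.sum_sigma']
  symm
  refine Finset.sum_bij (fun p _ => insert (p.2, a) p.1) ?_ ?_ ?_ (fun _ _ => rfl)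
  · rintro ⟨E, u⟩ h
    simp only [Finset.mem_sigma, mem_available, mem_layered] at h ⊢
    obtain ⟨⟨hL, hℓ, rfl⟩, hua, hu⟩ := h
    refine ⟨hL.insert_edge hu (isSource_iff_notMem_image.mpr haT), ?_, Finset.image_insert _ _ _⟩
    intro e he
    rcases Finset.mem_insert.mp he with rfl | he
    · exact hua
    · exact hℓ e he
  · have key : ∀ E ∈ layered ℓ T, ∀ w, (w, a) ∉ E := fun E hE w hw =>
      haT ((mem_layered.mp hE).2.2 ▸ Finset.mem_image_of_mem Prod.snd hw)
    rintro ⟨E, u⟩ h ⟨E', u'⟩ h' (heq : insert (u, a) E = insert (u', a) E')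
    have hE := key E (Finset.mem_sigma.mp h).1
    have hE' := key E' (Finset.mem_sigma.mp h').1
    have huu : u = u' := by
      have : (u, a) ∈ insert (u', a) E' := heq ▸ Finset.mem_insert_self _ _
      rcases Finset.mem_insert.mp this with h | h
      · exact (Prod.mk.inj h).1
      · exact absurd h (hE' u)
    subst huu
    have hEE : E = E' := by
      rw [← Finset.erase_insert (hE u), heq, Finset.erase_insert (hE' u)]
    rw [hEE]
  · intro E hE
    obtain ⟨hL, hℓ, hT⟩ := mem_layered.mp hE
    have ha : a ∈ E.image Prod.snd := hT ▸ Finset.mem_insert_self _ _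
    obtain ⟨⟨u, a'⟩, hu, rfl : a' = a⟩ := Finset.mem_image.mp ha
    refine ⟨⟨E.erase (u, a'), u⟩, ?_, Finset.insert_erase hu⟩
    simp only [Finset.mem_sigma, mem_available, mem_layered]
    refine ⟨⟨hL.mono (Finset.erase_subset _ _),
      fun e he => hℓ e (Finset.mem_of_mem_erase he), ?_⟩, hℓ _ hu, fun w hw => ?_⟩
    · have h1 : a' ∉ (E.erase (u, a')).image Prod.snd := by
        rw [← isSource_iff_notMem_image]
        intro w hw
        obtain ⟨hne, hw⟩ := Finset.mem_erase.mp hw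
        exact hne (by rw [hL.2 _ _ _ hw hu])
      rw [← Finset.erase_insert h1, ← Finset.image_insert (f := Prod.snd) (u, a'),
        Finset.insert_erase hu, hT, Finset.erase_insert haT]
    · obtain ⟨hne, hw⟩ := Finset.mem_erase.mp hw
      exact hne (by rw [hL.1 _ _ _ hw hu])

theorem layered_empty : layered ℓ (∅ : Finset V) = {∅} := by
  ext E
  rw [mem_layered, Finset.mem_singleton, Finset.image_eq_empty]
  refine ⟨fun h => h.2.2, ?_⟩
  rintro rfl
  simp [IsLaguerre]

theorem cycleWeight_empty {V ι : Type*} [Fintype ι] {ℓ : V → ι} (β : ι → ℝ) :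
    cycleWeight ℓ β (∅ : Finset (V × V)) = 1 := by
  refine Finset.prod_eq_one fun i _ => ?_
  have : layerCycles ℓ (∅ : Finset (V × V)) i = ∅ := by
    rw [Set.eq_empty_iff_forall_notMem]
    rintro S ⟨⟨⟨v, hv⟩, h, -⟩, -⟩
    obtain ⟨w, -, hw⟩ := h v hv
    exact absurd hw (Finset.notMem_empty _)
  rw [this, Set.ncard_empty, pow_zero]

/-- The total weight contributed by the choice of incoming edges of the vertices of `T` in
layer `i`. -/
noncomputable def layerFactor (ℓ : V → ι) (β : ι → ℝ) (T : Finset V) (i : ι) : ℝ :=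
  ∏ j ∈ Finset.range (T.filter fun v => ℓ v = i).card,
    (β i + (Finset.univ.filter fun v => ℓ v ≤ i).card - (T.filter fun v => ℓ v < i).card - j)

theorem layerFactor_insert (β : ι → ℝ) {T : Finset V} {a : V} (haT : a ∉ T)
    (hT : ∀ t ∈ T, ℓ t ≤ ℓ a) (i : ι) :
    layerFactor ℓ β (insert a T) i = layerFactor ℓ β T i *
      if i = ℓ a then
        β (ℓ a) + (Finset.univ.filter fun u => ℓ u ≤ ℓ a).card - T.card else 1 := by
  rcases lt_trichotomy i (ℓ a) with hi | rfl | hi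
  · rw [if_neg hi.ne, mul_one, layerFactor, layerFactor, Finset.filter_insert,
      if_neg hi.ne', Finset.filter_insert, if_neg hi.not_gt]
  · have hcard : (T.filter fun v => ℓ v < ℓ a).card + (T.filter fun v => ℓ v = ℓ a).card =
        T.card := by
      rw [← Finset.card_filter_add_card_filter_not (s := T) (fun v => ℓ v < ℓ a)]
      congr 2
      exact Finset.filter_congr fun t ht =>
        ⟨fun h => h.not_lt, fun h => (hT t ht).antisymm (not_lt.mp h)⟩
    rw [if_pos rfl, layerFactor, layerFactor, Finset.filter_insert, if_pos rfl,
      Finset.filter_insert, if_neg (lt_irrefl _), Finset.card_insert_of_notMem (by simp [haT]),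
      Finset.prod_range_succ, ← hcard]
    push_cast
    ring
  · have h : ∀ t ∈ insert a T, ¬ ℓ t = i := fun t ht h => by
      rcases Finset.mem_insert.mp ht with rfl | ht
      · exact hi.ne h
      · exact ((hT t ht).trans_lt hi).ne h
    rw [if_neg hi.ne', mul_one, layerFactor, layerFactor, Finset.filter_false_of_mem h,
      Finset.filter_false_of_mem fun t ht => h t (Finset.mem_insert_of_mem ht)]
    simp

theorem sum_cycleWeight_layered [Fintype ι] (ℓ : V → ι) (β : ι → ℝ) (T : Finset V) :
    ∑ E ∈ layered ℓ T, cycleWeight ℓ β E = ∏ i, layerFactor ℓ β T i := by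
  induction T using Finset.induction_on_max_value ℓ with
  | empty => simp [layered_empty, cycleWeight_empty, layerFactor]
  | insert a T haT hT ih =>
    rw [sum_layered_insert _ haT,
      Finset.sum_congr rfl fun E hE => sum_cycleWeight_insert β hE haT hT, ← Finset.sum_mul, ih,
      Finset.prod_congr rfl fun i _ => layerFactor_insert β haT hT i, Finset.prod_mul_distrib,
      Finset.prod_ite_eq' Finset.univ, if_pos (Finset.mem_univ _)]

theorem layerFactor_compl (β : ι → ℝ) (S : Finset V) (i : ι) :
    layerFactor ℓ β Sᶜ i = ∏ j ∈ Finset.range (Sᶜ.filter fun v => ℓ v = i).card,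
      (β i + 1 + (S.filter fun v => ℓ v ≤ i).card + j) := by
  have hcard : (Finset.univ.filter fun v => ℓ v ≤ i).card =
      (S.filter fun v => ℓ v ≤ i).card + (Sᶜ.filter fun v => ℓ v = i).card +
        (Sᶜ.filter fun v => ℓ v < i).card := by
    rw [← Finset.card_filter_add_card_filter_not
      (s := Finset.univ.filter fun v => ℓ v ≤ i) (fun v => v ∈ S), add_assoc]
    congr 1
    · congr 1
      ext v
      simp [and_comm]
    · rw [← Finset.card_union_of_disjoint]
      · congr 1
        ext v
        simp only [Finset.mem_filter, Finset.mem_univ, true_and, Finset.mem_union,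
          Finset.mem_compl, le_iff_eq_or_lt]
        tauto
      · rw [Finset.disjoint_filter]
        exact fun v _ h => h.not_lt
  rw [layerFactor, ← Finset.prod_range_reflect, hcard]
  refine Finset.prod_congr rfl fun j hj => ?_
  have hj' : j + 1 ≤ (Sᶜ.filter fun v => ℓ v = i).card := Finset.mem_range.mp hj
  rw [Nat.sub_sub, add_comm 1 j, Nat.cast_sub hj']
  push_cast
  ring

theorem sum_laguerre [Fintype ι] (ℓ : V → ι) (β : ι → ℝ) (x : ℝ) :
    ∑ E ∈ Finset.univ.filter
        (fun E : Finset (V × V) => IsLaguerre E ∧ ∀ e ∈ E, ℓ e.1 ≤ ℓ e.2),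
        x ^ pa E * cycleWeight ℓ β E =
      ∑ S : Finset V, x ^ S.card * ∏ i, layerFactor ℓ β Sᶜ i := by
  rw [← Finset.sum_fiberwise _ (fun E : Finset (V × V) => (E.image Prod.snd)ᶜ)]
  refine Finset.sum_congr rfl fun S _ => ?_
  rw [← sum_cycleWeight_layered, Finset.mul_sum]
  refine Finset.sum_congr ?_ ?_
  · ext E
    simp only [Finset.mem_filter, Finset.mem_univ, true_and, mem_layered, and_assoc,
      compl_eq_comm (y := S), eq_comm (a := Sᶜ)]
  · intro E hE
    obtain ⟨hL, -, hT⟩ := mem_layered.mp hE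
    rw [pa_eq_card_compl_image_snd hL, hT, compl_compl]

end Weight

section Counting

variable {r : ℕ} {n : Fin r → ℕ}

/-- The part of `S` in layer `i`. -/
def layerPart (S : Finset ((i : Fin r) × Fin (n i))) (i : Fin r) : Finset (Fin (n i)) :=
  Finset.univ.filter fun j => ⟨i, j⟩ ∈ S

theorem card_filter_layer (S : Finset ((i : Fin r) × Fin (n i))) (i : Fin r) :
    (S.filter fun v => v.1 = i).card = (layerPart S i).card := by
  rw [← Finset.card_map (Function.Embedding.sigmaMk (β := fun i => Fin (n i)) i)
    (s := layerPart S i)]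
  congr 1
  ext ⟨i', j⟩
  simp only [Finset.mem_filter, Finset.mem_map, layerPart, Finset.mem_univ, true_and,
    Function.Embedding.sigmaMk_apply]
  constructor
  · rintro ⟨h, rfl⟩
    exact ⟨j, h, rfl⟩
  · rintro ⟨j', h, heq⟩
    cases heq
    exact ⟨h, rfl⟩

theorem card_layerPart_compl (S : Finset ((i : Fin r) × Fin (n i))) (i : Fin r) :
    (layerPart Sᶜ i).card = n i - (layerPart S i).card := by
  have : layerPart Sᶜ i = (layerPart S i)ᶜ := by
    ext j
    simp [layerPart]
  rw [this, Finset.card_compl, Fintype.card_fin]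

theorem card_eq_sum_layerPart (S : Finset ((i : Fin r) × Fin (n i))) :
    S.card = ∑ i, (layerPart S i).card := by
  rw [Finset.card_eq_sum_card_fiberwise (f := Sigma.fst) (t := Finset.univ) (by simp)]
  exact Finset.sum_congr rfl fun i _ => card_filter_layer S i

theorem card_filter_le_eq_sum_layerPart (S : Finset ((i : Fin r) × Fin (n i))) (i : Fin r) :
    (S.filter fun v => v.1 ≤ i).card =
      ∑ j ∈ Finset.univ.filter (fun j => j ≤ i), (layerPart S j).card := by
  rw [Finset.card_eq_sum_card_fiberwise (f := Sigma.fst)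
    (t := Finset.univ.filter (fun j => j ≤ i)) (by intro v; simp)]
  refine Finset.sum_congr rfl fun j hj => ?_
  rw [← card_filter_layer, Finset.filter_filter]
  congr 1
  refine Finset.filter_congr fun v _ => and_iff_right_of_imp ?_
  rintro rfl
  exact (Finset.mem_filter.mp hj).2

theorem card_subsets_with_layerPart_card (k : Fin r → ℕ) :
    (Finset.univ.filter fun S : Finset ((i : Fin r) × Fin (n i)) =>
      (fun i => (layerPart S i).card) = k).card = ∏ i, (n i).choose (k i) := by
  have hpart : ∀ f : (i : Fin r) → Finset (Fin (n i)),
      layerPart (Finset.univ.sigma f) = f := by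
    intro f
    ext i j
    simp [layerPart]
  have hpi : (Fintype.piFinset fun i =>
      Finset.powersetCard (k i) (Finset.univ : Finset (Fin (n i)))).card =
      ∏ i, (n i).choose (k i) := by
    simp [Fintype.card_piFinset]
  rw [← hpi]
  refine Finset.card_nbij' layerPart (fun f => Finset.univ.sigma f) ?_ ?_ ?_ ?_
  · intro S hS
    have := (Finset.mem_filter.mp hS).2
    simpa [Finset.mem_powersetCard] using fun i => congrFun this i
  · intro f hf
    have hf' : ∀ i, (f i).card = k i := by simpa [Finset.mem_powersetCard] using hf
    simpa [hpart] using funext hf'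
  · intro S _
    ext ⟨i, j⟩
    simp [layerPart]
  · intro f _
    exact hpart f

theorem sum_subsets_eq_sum_layerPart_card (g : (Fin r → ℕ) → ℝ) :
    ∑ S : Finset ((i : Fin r) × Fin (n i)), g (fun i => (layerPart S i).card) =
      ∑ k ∈ Fintype.piFinset (fun i => Finset.range (n i + 1)),
        (∏ i, ((n i).choose (k i) : ℝ)) * g k := by
  rw [← Finset.sum_fiberwise_of_maps_to
    (g := fun S : Finset ((i : Fin r) × Fin (n i)) => fun i => (layerPart S i).card)
    (t := Fintype.piFinset (fun i => Finset.range (n i + 1)))]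
  · refine Finset.sum_congr rfl fun k _ => ?_
    rw [Finset.sum_congr rfl fun S hS => congrArg g (Finset.mem_filter.mp hS).2,
      Finset.sum_const, card_subsets_with_layerPart_card, nsmul_eq_mul, Nat.cast_prod]
  · intro S _
    rw [Fintype.mem_piFinset]
    intro i
    rw [Finset.mem_range, Nat.lt_succ_iff]
    exact (Finset.card_le_univ _).trans_eq (Fintype.card_fin _)

end Counting

end LD

open Finset

/-- combinatorial model for the unsigned monic multiple Laguerre
polynomials.  Summing over Laguerre digraphs `G` that are spanning subdigraphs
of the layered digraph `G_n` (edges `(i,j) → (i',j')` with `i ≤ i'`), with a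
weight `x` per path component and `α_i+1` per cycle component in layer `i`:
`Σ_G x^{pa(G)} Π_i (α_i+1)^{cyc_i(G)}
   = Σ_k (Π_i C(n_i,k_i)(α_i+1+k_1+···+k_i)^{rising(n_i-k_i)}) x^{|k|}`. -/
theorem multiple_laguerre_digraph_model (r : ℕ) (n : Fin r → ℕ) (x : ℝ) (α : Fin r → ℝ) :
    ∑ E ∈ Finset.univ.filter
        (fun E : Finset (((i : Fin r) × Fin (n i)) × ((i : Fin r) × Fin (n i))) =>
          LD.IsLaguerre E ∧ ∀ e ∈ E, e.1.1 ≤ e.2.1),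
        x ^ LD.pa E *
          ∏ i, (α i + 1) ^
            Set.ncard {S : Set ((i : Fin r) × Fin (n i)) |
              LD.IsCycleSet E S ∧ ∀ v ∈ S, v.1 = i}
      = ∑ k ∈ Fintype.piFinset (fun i => Finset.range (n i + 1)),
          (∏ i, (((n i).choose (k i) : ℝ) *
            ∏ j ∈ Finset.range (n i - k i),
              (α i + 1 + (∑ j' ∈ Finset.univ.filter (fun j' => j' ≤ i), (k j' : ℝ)) + (j : ℝ)))) *
            x ^ (∑ i, k i) := by
  refine (LD.sum_laguerre (fun v : (i : Fin r) × Fin (n i) => v.1) α x).trans ?_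
  have hcount := LD.sum_subsets_eq_sum_layerPart_card (n := n)
    fun k => x ^ (∑ i, k i) * ∏ i, ∏ j ∈ Finset.range (n i - k i),
      (α i + 1 + (∑ j' ∈ Finset.univ.filter (fun j' => j' ≤ i), (k j' : ℝ)) + (j : ℝ))
  simp only [← LD.card_eq_sum_layerPart] at hcount
  simp only [LD.layerFactor_compl, LD.card_filter_layer, LD.card_layerPart_compl,
    LD.card_filter_le_eq_sum_layerPart, Nat.cast_sum]
  rw [hcount]
  refine Finset.sum_congr rfl fun k _ => ?_
  rw [Finset.prod_mul_distrib]
  ring
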